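/- Let n ≥ k ≥ 1, β ≥ 1, and α ∈ (0,1]. Let μ be a function from the k-element subsets of [n]={1,…,n} to the nonnegative reals satisfying β-strong approximate basis exchange. Let P_1, …, P_m be a partition of [n], and for each i let C_i be a k-element subset of P_i with μ(C_i) > 0 such that μ(C_i) ≥ α·μ(T) for every k-element subset T of P_i with |C_i ∖ T| ≤ 1. Set C := C_1 ∪ ⋯ ∪ C_m. Then (β/α)^k · max{ μ(S) : S a k-element subset of C } ≥ max{ μ(S) : S a k-element subset of [n] }. -/

import Mathlib

open Finset

/-!
Let `A` be the local maximum in the part of an element `j ∈ S` lying outside the core-set `U`.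
Exchanging `j` between `A` and `S` gives `μ A * μ S ≤ β * μ A' * μ S'`, where `A'` is a neighbour of
`A` inside its part, so that `α * μ A' ≤ μ A`; cancelling `μ A` leaves `μ S ≤ β / α * μ S'`. The
element that replaces `j` in `S'` lies in `U`, so at most `k` such exchanges move `S` into `U`.
-/

section CoreSet

variable {V K : Type*} [DecidableEq V]

/-- `β`-strong approximate basis exchange for the values of a weight `μ` on `k`-element sets. Values
of `μ` on sets of other sizes are ignored. -/
def StrongApproxBasisExchange [Mul K] [LE K] (μ : Finset V → K) (k : ℕ) (β : K) : Prop :=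
  ∀ S T : Finset V, #S = k → #T = k → ∀ j ∈ T \ S, ∃ i ∈ S \ T,
    μ S * μ T ≤ β * μ (insert j (S.erase i)) * μ (insert i (T.erase j))

/-- `A` is a `k`-element subset of `P` that is an `α`-approximate local maximum of `μ`: its weight
is at least `α` times that of any `k`-element subset of `P` obtained from `A` by changing at most
one element. -/
structure IsApproxLocalMaxOn [Mul K] [LE K] (μ : Finset V → K) (k : ℕ) (α : K) (P : Set V)
    (A : Finset V) : Prop where
  subset : ↑A ⊆ P
  card_eq : #A = k
  mul_le : ∀ T : Finset V, ↑T ⊆ P → #T = k → #(A \ T) ≤ 1 → α * μ T ≤ μ A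

theorem card_insert_erase_of_mem_of_notMem {S : Finset V} {i j : V} (hi : i ∈ S) (hj : j ∉ S) :
    #(insert j (S.erase i)) = #S := by
  rw [card_insert_of_notMem (mt mem_of_mem_erase hj), card_erase_add_one hi]

theorem card_sdiff_insert_erase_le_one (S : Finset V) (i j : V) :
    #(S \ insert j (S.erase i)) ≤ 1 := by
  have hsub : S \ insert j (S.erase i) ⊆ {i} := by
    intro v
    simp only [mem_sdiff, mem_insert, mem_erase, mem_singleton]
    tauto
  simpa using card_le_card hsub

theorem IsApproxLocalMaxOn.mul_insert_erase_le [Mul K] [LE K] {μ : Finset V → K} {k : ℕ} {α : K}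
    {P : Set V} {A : Finset V} (hA : IsApproxLocalMaxOn μ k α P A) {i j : V}
    (hi : i ∈ A) (hjP : j ∈ P) (hjA : j ∉ A) : α * μ (insert j (A.erase i)) ≤ μ A := by
  have hsub : (↑(insert j (A.erase i)) : Set V) ⊆ P := by
    rw [coe_insert]
    exact Set.insert_subset hjP ((coe_subset.2 (erase_subset i A)).trans hA.subset)
  exact hA.mul_le _ hsub ((card_insert_erase_of_mem_of_notMem hi hjA).trans hA.card_eq)
    (card_sdiff_insert_erase_le_one A i j)

variable [Field K] [LinearOrder K] [IsStrictOrderedRing K] {μ : Finset V → K} {k : ℕ} {α β : K}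

theorem StrongApproxBasisExchange.exists_le_div_mul (hexch : StrongApproxBasisExchange μ k β)
    (hμ : ∀ S : Finset V, #S = k → 0 ≤ μ S) (hα : 0 < α) (hβ : 0 ≤ β)
    {P : Set V} {A S : Finset V} (hA : IsApproxLocalMaxOn μ k α P A) (hApos : 0 < μ A)
    (hS : #S = k) {j : V} (hjP : j ∈ P) (hjS : j ∈ S) (hjA : j ∉ A) :
    ∃ i ∈ A, i ∉ S ∧ μ S ≤ β / α * μ (insert i (S.erase j)) := by
  obtain ⟨i, hi, hle⟩ := hexch A S hA.card_eq hS j (mem_sdiff.2 ⟨hjS, hjA⟩)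
  obtain ⟨hiA, hiS⟩ := mem_sdiff.1 hi
  refine ⟨i, hiA, hiS, ?_⟩
  set A' := insert j (A.erase i)
  set S' := insert i (S.erase j)
  have hA' : α * μ A' ≤ μ A := hA.mul_insert_erase_le hiA hjP hjA
  have hS' : 0 ≤ μ S' := hμ S' ((card_insert_erase_of_mem_of_notMem hjS hiS).trans hS)
  have hcancel : μ A * (α * μ S) ≤ μ A * (β * μ S') :=
    calc μ A * (α * μ S) = α * (μ A * μ S) := by ring
      _ ≤ α * (β * μ A' * μ S') := by gcongr
      _ = α * μ A' * (β * μ S') := by ring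
      _ ≤ μ A * (β * μ S') := by gcongr
  rw [div_mul_eq_mul_div, le_div_iff₀' hα]
  exact le_of_mul_le_mul_left hcancel hApos

theorem exists_subset_le_pow_mul_of_exchange {r : K} (hr : 0 ≤ r) (U : Set V)
    [DecidablePred (· ∈ U)]
    (hstep : ∀ S : Finset V, #S = k → ∀ j ∈ S, j ∉ U →
      ∃ i ∈ U, i ∉ S ∧ μ S ≤ r * μ (insert i (S.erase j)))
    (S : Finset V) (hS : #S = k) :
    ∃ T : Finset V, ↑T ⊆ U ∧ #T = k ∧ μ S ≤ r ^ #{v ∈ S | v ∉ U} * μ T := by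
  induction hd : #{v ∈ S | v ∉ U} generalizing S with
  | zero =>
    have hSU : ↑S ⊆ U := by simpa [filter_eq_empty_iff, Set.subset_def] using hd
    exact ⟨S, hSU, hS, by simp⟩
  | succ d ih =>
    obtain ⟨j, hj⟩ : {v ∈ S | v ∉ U}.Nonempty := card_pos.1 (hd ▸ d.succ_pos)
    obtain ⟨hjS, hjU⟩ := mem_filter.1 hj
    obtain ⟨i, hiU, hiS, hle⟩ := hstep S hS j hjS hjU
    have hd' : #{v ∈ insert i (S.erase j) | v ∉ U} = d := by
      rw [filter_insert, if_neg (not_not.2 hiU), filter_erase, card_erase_of_mem hj, hd,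
        Nat.add_sub_cancel]
    obtain ⟨T, hTU, hT, hle'⟩ :=
      ih _ ((card_insert_erase_of_mem_of_notMem hjS hiS).trans hS) hd'
    refine ⟨T, hTU, hT, ?_⟩
    calc μ S ≤ r * μ (insert i (S.erase j)) := hle
      _ ≤ r * (r ^ d * μ T) := by gcongr
      _ = r ^ (d + 1) * μ T := by ring

theorem strong_basis_exchange_core_set_general {ι : Type*}
    (hexch : StrongApproxBasisExchange μ k β) (hμ : ∀ S : Finset V, #S = k → 0 ≤ μ S)
    (hα : 0 < α) (hαβ : α ≤ β) {P : ι → Set V} (hcover : ⋃ i, P i = Set.univ)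
    {C : ι → Finset V} (hC : ∀ i, IsApproxLocalMaxOn μ k α (P i) (C i))
    (hCpos : ∀ i, 0 < μ (C i)) (S : Finset V) (hS : #S = k) :
    ∃ T : Finset V, ↑T ⊆ ⋃ i, (C i : Set V) ∧ #T = k ∧ μ S ≤ (β / α) ^ k * μ T := by
  classical
  have hβ : 0 ≤ β := hα.le.trans hαβ
  have hstep : ∀ S : Finset V, #S = k → ∀ j ∈ S, j ∉ ⋃ i, (C i : Set V) →
      ∃ x ∈ ⋃ i, (C i : Set V), x ∉ S ∧ μ S ≤ β / α * μ (insert x (S.erase j)) := by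
    intro S hS j hjS hjC
    obtain ⟨i, hjP⟩ := Set.iUnion_eq_univ_iff.1 hcover j
    obtain ⟨x, hxC, hx⟩ := hexch.exists_le_div_mul hμ hα hβ (hC i) (hCpos i) hS hjP hjS
      fun hjCi ↦ hjC (Set.mem_iUnion_of_mem i hjCi)
    exact ⟨x, Set.mem_iUnion_of_mem i hxC, hx⟩
  obtain ⟨T, hTC, hT, hle⟩ :=
    exists_subset_le_pow_mul_of_exchange (div_nonneg hβ hα.le) _ hstep S hS
  refine ⟨T, hTC, hT, hle.trans (mul_le_mul_of_nonneg_right ?_ (hμ T hT))⟩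
  exact pow_le_pow_right₀ ((one_le_div hα).2 hαβ) (hS ▸ card_filter_le S _)

end CoreSet

/-- If `μ` satisfies `β`-strong approximate basis exchange and each `C_i` is an `α`-approximate
local maximum (in the 1-neighborhood) of `μ` inside the part `P_i` of a partition of `[n]`,
then the union `C = C_1 ∪ ⋯ ∪ C_m` is a `(β/α)^k`-approximate core-set: the best `k`-subset of
`C` is within a `(β/α)^k` factor of the global maximum. -/
theorem strong_basis_exchange_core_set
    (n k m : ℕ) (β α : ℝ)
    (hk : 1 ≤ k) (hkn : k ≤ n)
    (hβ : 1 ≤ β) (hα : 0 < α) (hα1 : α ≤ 1)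
    (μ : Finset (Fin n) → ℝ)
    (hμnonneg : ∀ S : Finset (Fin n), S.card = k → 0 ≤ μ S)
    (hexch : ∀ S T : Finset (Fin n), S.card = k → T.card = k → ∀ j ∈ T \ S,
      ∃ i ∈ S \ T,
        μ S * μ T ≤ β * μ (insert j (S.erase i)) * μ (insert i (T.erase j)))
    (P : Fin m → Finset (Fin n))
    (hdisj : ∀ i j : Fin m, i ≠ j → Disjoint (P i) (P j))
    (hcover : Finset.univ.biUnion P = Finset.univ)
    (C : Fin m → Finset (Fin n))
    (hCsub : ∀ i, C i ⊆ P i)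
    (hCcard : ∀ i, (C i).card = k)
    (hCpos : ∀ i, 0 < μ (C i))
    (hloc : ∀ i : Fin m, ∀ T ⊆ P i, T.card = k → ((C i) \ T).card ≤ 1 →
      α * μ T ≤ μ (C i)) :
    ∀ Sstar : Finset (Fin n), Sstar.card = k →
      μ Sstar ≤ (β / α) ^ k *
        ((Finset.univ.biUnion C).powersetCard k).fold max 0 μ := by
  intro S hS
  obtain ⟨T, hTC, hT, hle⟩ := strong_basis_exchange_core_set_general (P := fun i ↦ ↑(P i)) hexch
    hμnonneg hα (hα1.trans hβ) (by simpa [← coe_inj] using hcover)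
    (fun i ↦ ⟨mod_cast hCsub i, hCcard i, fun T hT ↦ hloc i T (mod_cast hT)⟩) hCpos S hS
  have hTmem : T ∈ (univ.biUnion C).powersetCard k :=
    mem_powersetCard.2 ⟨by simpa [← coe_subset] using hTC, hT⟩
  grw [hle, (le_fold_max (μ T)).2 (.inr ⟨T, hTmem, le_rfl⟩)]
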